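/- arXiv:1509.02098 — 3 statements merged into one kernel-verified Lean document; each statement's English description precedes it below -/
import Mathlib

section
/- Let d ≥ 1 and let a : ℝ^d → ℝ be a positive-definite quadratic form, extended to ℂ^d as a complex-bilinear quadratic polynomial. For k ∈ {1,2} define p_k : ℂ^{1+d} → ℂ by p_k(σ,ξ) := (−1)^k i σ² + a(ξ). Then p_k satisfies the simple-characteristic property in every direction: for every M ∈ ℝ^{1+d} ∖ {0}, every ζ = (σ,ξ) ∈ ℝ^{1+d} and every θ ≥ 0, if p_k(ζ + iθM) = 0 and the derivative of the map t ↦ p_k(ζ + itM) vanishes at t = θ, then ζ = 0 and θ = 0. -/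
/-!
A double zero at `z = ζ + iθM` of a quadratic form `P` along the line `t ↦ ζ + itM` means that
`P z = 0` and that `M` is polar to `z`. Expanding `P ζ = P (z - iθM)` around `z` therefore leaves
only `P ζ + θ² P M = 0`. At a real point `(σ, ξ)` the symbol is `b σ² + a(ξ)`, a combination of `b`
and `1` with nonnegative coefficients. As `b` is not in `(-∞, 0]`, such a combination vanishes only
if both coefficients do, and definiteness gives `ζ = 0` and `θM = 0`.
-/

open Complex QuadraticMap

section DoubleZero

variable {𝕜 E F : Type*} [NontriviallyNormedField 𝕜] [AddCommGroup E] [Module 𝕜 E]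
  [NormedAddCommGroup F] [NormedSpace 𝕜 F]

theorem deriv_quadraticMap_add_smul (Q : QuadraticMap 𝕜 E F) (x m : E) (t : 𝕜) :
    deriv (fun s : 𝕜 => Q (x + s • m)) t = polar Q (x + t • m) m := by
  rw [← Q.lineDeriv, lineDeriv]
  simpa only [add_smul, add_assoc, add_zero] using
    (deriv_comp_const_add (fun s : 𝕜 => Q (x + s • m)) t 0).symm

theorem quadraticMap_eq_sq_smul_of_double_zero (Q : QuadraticMap 𝕜 E F) {x m : E} {t : 𝕜}
    (hzero : Q (x + t • m) = 0) (hderiv : deriv (fun s : 𝕜 => Q (x + s • m)) t = 0) :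
    Q x = t ^ 2 • Q m := by
  have hpolar : polar Q (x + t • m) m = 0 := by rw [← deriv_quadraticMap_add_smul, hderiv]
  calc Q x = Q (x + t • m + (-t) • m) := by rw [neg_smul, add_neg_cancel_right]
    _ = t ^ 2 • Q m := by
      rw [QuadraticMap.map_add Q, hzero, polar_smul_right, hpolar, Q.map_smul]
      simp only [smul_zero, zero_add, add_zero, neg_mul_neg, pow_two]

end DoubleZero

theorem quadraticForm_add_sq_mul_eq_zero_of_imaginary_double_zero {W : Type*} [AddCommGroup W]
    [Module ℂ W] (P : QuadraticForm ℂ W) {x m : W} {θ : ℝ} (hzero : P (x + (θ * I) • m) = 0)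
    (hderiv : deriv (fun t : ℝ => P (x + (t * I) • m)) θ = 0) :
    P x + θ ^ 2 * P m = 0 := by
  simp only [mul_smul, coe_smul] at hzero hderiv
  have hx : P x = θ ^ 2 • P (I • m) :=
    quadraticMap_eq_sq_smul_of_double_zero (P.restrictScalars (S := ℝ)) hzero hderiv
  rw [hx, P.map_smul, I_mul_I, real_smul, ofReal_pow, smul_eq_mul]
  ring

theorem eq_zero_and_eq_zero_of_mul_add_eq_zero {b : ℂ} (hb : b ∈ slitPlane) {r s : ℝ}
    (hr : 0 ≤ r) (hs : 0 ≤ s) (h : b * r + s = 0) : r = 0 ∧ s = 0 := by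
  have hre : b.re * r + s = 0 := by simpa using congrArg re h
  have him : b.im = 0 ∨ r = 0 := by simpa using congrArg im h
  have hr0 : r = 0 := by
    rcases mem_slitPlane_iff.mp hb with hb_re | hb_im
    · nlinarith
    · exact him.resolve_left hb_im
  exact ⟨hr0, by simpa [hr0] using hre⟩

theorem neg_one_pow_mul_I_mem_slitPlane (k : ℕ) : (-1 : ℂ) ^ k * I ∈ slitPlane := by
  rcases neg_one_pow_eq_or ℂ k with h | h <;> simp [h, mem_slitPlane_iff]

section Symbol

variable {ι : Type*} [Fintype ι] [DecidableEq ι]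

theorem matrix_toQuadraticForm'_apply {R : Type*} [CommRing R] (A : Matrix ι ι R) (ξ : ι → R) :
    A.toQuadraticForm' ξ = ∑ j, ∑ l, A j l * ξ j * ξ l := by
  simp only [Matrix.toQuadraticForm', LinearMap.BilinMap.toQuadraticMap_apply,
    Matrix.toLinearMap₂'_apply, smul_eq_mul]
  exact Finset.sum_congr rfl fun j _ => Finset.sum_congr rfl fun l _ => by ring

theorem matrix_toQuadraticForm'_posDef_of_mul_sum_sq_le {A : Matrix ι ι ℝ} {c : ℝ} (hc : 0 < c)
    (hA : ∀ ξ : ι → ℝ, c * ∑ j, ξ j ^ 2 ≤ ∑ j, ∑ l, A j l * ξ j * ξ l) :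
    A.toQuadraticForm'.PosDef := by
  intro ξ hξ
  obtain ⟨j, hj⟩ := Function.ne_iff.mp hξ
  have hsum : 0 < ∑ j, ξ j ^ 2 :=
    Finset.sum_pos' (fun _ _ => sq_nonneg _) ⟨j, Finset.mem_univ j, sq_pos_of_ne_zero hj⟩
  calc 0 < c * ∑ j, ξ j ^ 2 := mul_pos hc hsum
    _ ≤ A.toQuadraticForm' ξ := (hA ξ).trans_eq (matrix_toQuadraticForm'_apply A ξ).symm

/-- The principal symbol `(σ, ξ) ↦ b σ² + a(ξ)` of `b D_s² + A` on `ℂ^{1+d}`. The form `a` is given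
by its real coefficient matrix, not assumed symmetric, whose entries are cast to `ℂ` in order to
extend `a` complex-bilinearly. -/
noncomputable def principalSymbol (b : ℂ) (A : Matrix ι ι ℝ) : QuadraticForm ℂ (ℂ × (ι → ℂ)) :=
  (b • QuadraticMap.sq).prod (A.map ofReal).toQuadraticForm'

theorem principalSymbol_apply (b : ℂ) (A : Matrix ι ι ℝ) (σ : ℂ) (ξ : ι → ℂ) :
    principalSymbol b A (σ, ξ) = b * σ ^ 2 + ∑ j, ∑ l, (A j l : ℂ) * ξ j * ξ l := by
  simp [principalSymbol, matrix_toQuadraticForm'_apply, pow_two]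

theorem principalSymbol_ofReal (b : ℂ) (A : Matrix ι ι ℝ) (σ : ℝ) (ξ : ι → ℝ) :
    principalSymbol b A (σ, fun j => (ξ j : ℂ)) =
      b * (σ ^ 2 : ℝ) + (A.toQuadraticForm' ξ : ℝ) := by
  simp [principalSymbol_apply, matrix_toQuadraticForm'_apply]

theorem stmt2_general {A : Matrix ι ι ℝ} (hA : A.toQuadraticForm'.PosDef)
    {b : ℂ} (hb : b ∈ slitPlane) {Mσ : ℝ} {Mξ : ι → ℝ} (hM : ¬ (Mσ = 0 ∧ Mξ = 0))
    {σ : ℝ} {ξ : ι → ℝ} {θ : ℝ}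
    (hzero : principalSymbol b A
      (((σ : ℂ), fun j => (ξ j : ℂ)) + (θ * I) • ((Mσ : ℂ), fun j => (Mξ j : ℂ))) = 0)
    (hderiv : deriv (fun t : ℝ => principalSymbol b A
      (((σ : ℂ), fun j => (ξ j : ℂ)) + (t * I) • ((Mσ : ℂ), fun j => (Mξ j : ℂ)))) θ = 0) :
    σ = 0 ∧ ξ = 0 ∧ θ = 0 := by
  have hξ_nonneg := hA.nonneg ξ
  have hMξ_nonneg : 0 ≤ θ ^ 2 * A.toQuadraticForm' Mξ := mul_nonneg (sq_nonneg θ) (hA.nonneg Mξ)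
  have hsum := quadraticForm_add_sq_mul_eq_zero_of_imaginary_double_zero _ hzero hderiv
  rw [principalSymbol_ofReal, principalSymbol_ofReal] at hsum
  obtain ⟨hσ_sum, hξ_sum⟩ :
      σ ^ 2 + (θ * Mσ) ^ 2 = 0 ∧ A.toQuadraticForm' ξ + θ ^ 2 * A.toQuadraticForm' Mξ = 0 :=
    eq_zero_and_eq_zero_of_mul_add_eq_zero hb (by positivity) (by positivity) (by
      push_cast at hsum ⊢
      linear_combination hsum)
  obtain ⟨hσ, hθMσ⟩ := (add_eq_zero_iff_of_nonneg (sq_nonneg σ) (sq_nonneg _)).mp hσ_sum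
  obtain ⟨hξ, hθMξ⟩ := (add_eq_zero_iff_of_nonneg hξ_nonneg hMξ_nonneg).mp hξ_sum
  refine ⟨pow_eq_zero_iff two_ne_zero |>.mp hσ, hA.anisotropic ξ hξ, ?_⟩
  by_contra hθ
  have hMσ : Mσ = 0 := by simpa [hθ] using hθMσ
  have hMξ : A.toQuadraticForm' Mξ = 0 := by simpa [hθ] using hθMξ
  exact hM ⟨hMσ, hA.anisotropic Mξ hMξ⟩

end Symbol

/-- For a positive-definite quadratic form `a` on `ℝ^d` (extended complex-bilinearly to `ℂ^d`),
the symbols `p_k(σ,ξ) = (-1)^k i σ² + a(ξ)`, `k = 1, 2`, satisfy the simple-characteristic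
property in every nonzero real direction. -/
theorem stmt2 (d : ℕ) (hd : 1 ≤ d)
    (A : Fin d → Fin d → ℝ)
    (hpos : ∃ c > 0, ∀ ξ : Fin d → ℝ,
      c * (∑ j, (ξ j) ^ 2) ≤ ∑ j, ∑ l, A j l * ξ j * ξ l)
    (k : ℕ) (hk : k = 1 ∨ k = 2)
    (p : ℂ → (Fin d → ℂ) → ℂ)
    (hp : ∀ (σ : ℂ) (ξ : Fin d → ℂ),
      p σ ξ = (-1 : ℂ) ^ k * Complex.I * σ ^ 2 + ∑ j, ∑ l, (A j l : ℂ) * ξ j * ξ l) :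
    ∀ (Mσ : ℝ) (Mξ : Fin d → ℝ), ¬ (Mσ = 0 ∧ Mξ = 0) →
      ∀ (σ : ℝ) (ξ : Fin d → ℝ) (θ : ℝ), 0 ≤ θ →
        p ((σ : ℂ) + (θ : ℂ) * Complex.I * (Mσ : ℂ))
          (fun j => (ξ j : ℂ) + (θ : ℂ) * Complex.I * (Mξ j : ℂ)) = 0 →
        deriv (fun t : ℝ =>
          p ((σ : ℂ) + (t : ℂ) * Complex.I * (Mσ : ℂ))
            (fun j => (ξ j : ℂ) + (t : ℂ) * Complex.I * (Mξ j : ℂ))) θ = 0 →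
        σ = 0 ∧ ξ = 0 ∧ θ = 0 := by
  obtain ⟨c, hc, hcoercive⟩ := hpos
  obtain rfl : p = fun σ ξ => principalSymbol ((-1) ^ k * I) A (σ, ξ) :=
    funext₂ fun σ ξ => (hp σ ξ).trans (principalSymbol_apply _ A σ ξ).symm
  exact fun Mσ Mξ hM σ ξ θ _ hzero hderiv =>
    stmt2_general (matrix_toQuadraticForm'_posDef_of_mul_sum_sq_le hc hcoercive)
      (neg_one_pow_mul_I_mem_slitPlane k) hM hzero hderiv
end

section
/- There exists C > 0 such that for every k ∈ {1,2}, every z ∈ K, every ζ' ∈ ℝ × ℝ^n, every t̂ ∈ ℝ × ℝ^n × ℝ with t̂_{ξd} ≥ 0, and every h ∈ ℂ with h² = m̂_k(z,ζ',t̂) and Re h ≥ 0: if the root ρ̂_{k,+} = −i t̂_{ξd} + i h is real (equivalently Re h = t̂_{ξd}), then 0 ≤ t̂_{ξd} ≤ C (|t̂'| + |ζ'|), |ζ'| ≤ C |t̂|, and the other root has prescribed nonpositive imaginary part: Im ρ̂_{k,−} = −2 t̂_{ξd}. -/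
/-- `m̂_k(z,ζ',t̂) = (-1)^k i (σ + i t̂_σ)² + r_z(ξ' + i t̂_{ξ'})`, where `r_z` is the
complex-bilinear extension of the quadratic form with coefficient matrix `R`. -/
noncomputable def mhat {n : ℕ} (R : Fin n → Fin n → ℝ) (k : ℕ)
    (σ : ℝ) (ξ : Fin n → ℝ) (tσ : ℝ) (tξ : Fin n → ℝ) : ℂ :=
  (-1 : ℂ) ^ k * Complex.I * ((σ : ℂ) + Complex.I * (tσ : ℂ)) ^ 2 +
    ∑ j, ∑ l, (R j l : ℂ) * ((ξ j : ℂ) + Complex.I * (tξ j : ℂ)) *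
      ((ξ l : ℂ) + Complex.I * (tξ l : ℂ))

/-- `μ̂_k = 4 t̂_{ξd}² Re m̂_k − 4 t̂_{ξd}⁴ + (Im m̂_k)²`. -/
noncomputable def muhat {n : ℕ} (R : Fin n → Fin n → ℝ) (k : ℕ)
    (σ : ℝ) (ξ : Fin n → ℝ) (tσ : ℝ) (tξ : Fin n → ℝ) (tξd : ℝ) : ℝ :=
  4 * tξd ^ 2 * (mhat R k σ ξ tσ tξ).re - 4 * tξd ^ 4 + (mhat R k σ ξ tσ tξ).im ^ 2

/-!
Write `h = a + i b` and `s = (-1)^k`; the root `ρ̂_{k,+}` is real exactly when `a = t̂_{ξd}`.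
The bound on `t̂_{ξd}` is `a² ≤ |h|² = |m̂_k|`, as `m̂_k` is quadratic in `(ζ', t̂')`.
For the bound on `ζ'`, the real part of `h² = m̂_k` reads
`r(ξ') + b² = a² + 2 s σ t̂_σ + r(t̂_{ξ'})`, which by ellipticity controls `c |ξ'|² + b²` by `|t̂|²`
up to `σ² / 2`. The imaginary part controls `σ²` by `|t̂|² + b²` up to `c |ξ'|² / 2`. Adding the
two cancels `b²` and absorbs the remainders. The constants depend only on `c` and on a bound for the
coefficients of `r_z`, which is uniform in `z` by compactness.
-/

section BilinSum

variable {ι 𝕜 : Type*} [Fintype ι]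

/-- The value at `(x, y)` of the bilinear form with coefficients `A`. The scalars are arbitrary so
that real forms and their complexifications are both covered. -/
def bilinSum [CommSemiring 𝕜] (A : ι → ι → 𝕜) (x y : ι → 𝕜) : 𝕜 :=
  ∑ j, ∑ l, A j l * x j * y l

theorem bilinSum_swap [CommSemiring 𝕜] (A : ι → ι → 𝕜) (x y : ι → 𝕜) :
    bilinSum A y x = bilinSum (fun j l => A l j) x y := by
  simp only [bilinSum]
  rw [Finset.sum_comm]
  simp only [mul_right_comm]

theorem sq_norm_bilinSum_le [NormedField 𝕜] (A : ι → ι → 𝕜) (x y : ι → 𝕜) :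
    ‖bilinSum A x y‖ ^ 2 ≤
      (∑ j, ∑ l, ‖A j l‖ ^ 2) * ((∑ j, ‖x j‖ ^ 2) * ∑ j, ‖y j‖ ^ 2) := by
  have norm_le : ‖bilinSum A x y‖ ≤ ∑ p : ι × ι, ‖A p.1 p.2‖ * (‖x p.1‖ * ‖y p.2‖) := by
    rw [bilinSum, ← Fintype.sum_prod_type' fun j l => A j l * x j * y l]
    refine (norm_sum_le _ _).trans_eq (Finset.sum_congr rfl fun p _ => ?_)
    rw [norm_mul, norm_mul, mul_assoc]
  calc ‖bilinSum A x y‖ ^ 2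
      ≤ (∑ p : ι × ι, ‖A p.1 p.2‖ * (‖x p.1‖ * ‖y p.2‖)) ^ 2 := by gcongr
    _ ≤ (∑ p : ι × ι, ‖A p.1 p.2‖ ^ 2) * ∑ p : ι × ι, (‖x p.1‖ * ‖y p.2‖) ^ 2 :=
        Finset.sum_mul_sq_le_sq_mul_sq _ _ _
    _ = (∑ j, ∑ l, ‖A j l‖ ^ 2) * ((∑ j, ‖x j‖ ^ 2) * ∑ j, ‖y j‖ ^ 2) := by
        simp only [Fintype.sum_prod_type, mul_pow, Finset.sum_mul_sum]

theorem two_mul_norm_bilinSum_le [NormedField 𝕜] {A : ι → ι → 𝕜} {F ε : ℝ}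
    (hA : ∑ j, ∑ l, ‖A j l‖ ^ 2 ≤ F) (hε : 0 < ε) (x y : ι → 𝕜) :
    2 * ‖bilinSum A x y‖ ≤ ε * ∑ j, ‖x j‖ ^ 2 + F / ε * ∑ j, ‖y j‖ ^ 2 := by
  have hF : 0 ≤ F := le_trans (by positivity) hA
  refine le_of_sq_le_sq ?_ (by positivity)
  calc (2 * ‖bilinSum A x y‖) ^ 2
      ≤ 4 * (F * ((∑ j, ‖x j‖ ^ 2) * ∑ j, ‖y j‖ ^ 2)) := by
        rw [mul_pow]
        norm_num only
        grw [sq_norm_bilinSum_le, hA]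
    _ = 4 * (ε * ∑ j, ‖x j‖ ^ 2) * (F / ε * ∑ j, ‖y j‖ ^ 2) := by field_simp
    _ ≤ (ε * ∑ j, ‖x j‖ ^ 2 + F / ε * ∑ j, ‖y j‖ ^ 2) ^ 2 := four_mul_le_sq_add _ _

theorem two_mul_abs_bilinSum_le {A : ι → ι → ℝ} {F ε : ℝ}
    (hA : ∑ j, ∑ l, A j l ^ 2 ≤ F) (hε : 0 < ε) (x y : ι → ℝ) :
    2 * |bilinSum A x y| ≤ ε * ∑ j, x j ^ 2 + F / ε * ∑ j, y j ^ 2 := by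
  simpa only [Real.norm_eq_abs, sq_abs] using
    two_mul_norm_bilinSum_le (A := A) (by simpa only [Real.norm_eq_abs, sq_abs]) hε x y

theorem bilinSum_ofReal_add_I_mul_re (A : ι → ι → ℝ) (x y : ι → ℝ) :
    (bilinSum (fun j l => (A j l : ℂ)) (fun j => x j + Complex.I * y j)
      (fun j => x j + Complex.I * y j)).re = bilinSum A x x - bilinSum A y y := by
  simp [bilinSum]

theorem bilinSum_ofReal_add_I_mul_im (A : ι → ι → ℝ) (x y : ι → ℝ) :
    (bilinSum (fun j l => (A j l : ℂ)) (fun j => x j + Complex.I * y j)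
      (fun j => x j + Complex.I * y j)).im = bilinSum A x y + bilinSum A y x := by
  simp [bilinSum, Finset.sum_add_distrib]

end BilinSum

theorem sq_norm_ofReal_add_I_mul (x y : ℝ) : ‖(x + Complex.I * y : ℂ)‖ ^ 2 = x ^ 2 + y ^ 2 := by
  rw [Complex.sq_norm, mul_comm, Complex.normSq_add_mul_I]

theorem exists_forall_sum_sum_sq_le {ι K : Type*} [Fintype ι] [TopologicalSpace K]
    [CompactSpace K] {R : K → ι → ι → ℝ} (hR : ∀ j l, Continuous fun z => R z j l) :
    ∃ F, 0 ≤ F ∧ ∀ z, ∑ j, ∑ l, R z j l ^ 2 ≤ F := by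
  have hcont : Continuous fun z => ∑ j, ∑ l, R z j l ^ 2 := by fun_prop
  obtain ⟨F, hF⟩ := (isCompact_range hcont).bddAbove
  exact ⟨max F 0, le_max_right _ _, fun z => (hF ⟨z, rfl⟩).trans (le_max_left _ _)⟩

theorem sqrt_add_le_sqrt_add_sqrt {x y : ℝ} (hx : 0 ≤ x) (hy : 0 ≤ y) : √(x + y) ≤ √x + √y := by
  refine Real.sqrt_le_iff.2 ⟨by positivity, ?_⟩
  rw [add_sq, Real.sq_sqrt hx, Real.sq_sqrt hy]
  linarith [mul_nonneg (Real.sqrt_nonneg x) (Real.sqrt_nonneg y)]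

section Mhat

variable {n : ℕ} {R : Fin n → Fin n → ℝ} {k : ℕ} {σ : ℝ} {ξ : Fin n → ℝ} {tσ : ℝ}
  {tξ : Fin n → ℝ} {h : ℂ} {c F : ℝ}

theorem mhat_eq_add_bilinSum :
    mhat R k σ ξ tσ tξ = (-1 : ℂ) ^ k * Complex.I * (σ + Complex.I * tσ) ^ 2 +
      bilinSum (fun j l => (R j l : ℂ)) (fun j => ξ j + Complex.I * tξ j)
        (fun j => ξ j + Complex.I * tξ j) := rfl

theorem mhat_re :
    (mhat R k σ ξ tσ tξ).re =
      -2 * (-1) ^ k * σ * tσ + bilinSum R ξ ξ - bilinSum R tξ tξ := by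
  rw [mhat_eq_add_bilinSum, Complex.add_re, bilinSum_ofReal_add_I_mul_re, add_sub_assoc]
  congr 1
  calc ((-1 : ℂ) ^ k * Complex.I * (σ + Complex.I * tσ) ^ 2).re
      = -(-1) ^ k * (σ * tσ + tσ * σ) := by
        rcases k.even_or_odd with hk | hk <;> simp [hk.neg_one_pow, sq, add_comm]
    _ = -2 * (-1) ^ k * σ * tσ := by ring

theorem mhat_im :
    (mhat R k σ ξ tσ tξ).im =
      (-1) ^ k * (σ ^ 2 - tσ ^ 2) + (bilinSum R ξ tξ + bilinSum R tξ ξ) := by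
  rw [mhat_eq_add_bilinSum, Complex.add_im, bilinSum_ofReal_add_I_mul_im]
  congr 1
  rcases k.even_or_odd with hk | hk <;> simp [hk.neg_one_pow, sq]

theorem norm_mhat_le (hR : ∑ j, ∑ l, R j l ^ 2 ≤ F) :
    ‖mhat R k σ ξ tσ tξ‖ ≤
      (1 + F) * ((tσ ^ 2 + ∑ j, tξ j ^ 2) + (σ ^ 2 + ∑ j, ξ j ^ 2)) := by
  have hF : 0 ≤ F := le_trans (by positivity) hR
  have time_part : ‖(-1 : ℂ) ^ k * Complex.I * (σ + Complex.I * tσ) ^ 2‖ = σ ^ 2 + tσ ^ 2 := by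
    simp [← sq_norm_ofReal_add_I_mul]
  have space_part := two_mul_norm_bilinSum_le (A := fun j l => (R j l : ℂ))
    (by simpa using hR) one_pos (fun j => ξ j + Complex.I * tξ j) (fun j => ξ j + Complex.I * tξ j)
  simp only [sq_norm_ofReal_add_I_mul, Finset.sum_add_distrib, one_mul, div_one] at space_part
  rw [mhat_eq_add_bilinSum]
  grw [norm_add_le, time_part]
  have : 0 ≤ (1 + F) * (∑ j, ξ j ^ 2 + ∑ j, tξ j ^ 2) := by positivity
  have : 0 ≤ F * (σ ^ 2 + tσ ^ 2) := by positivity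
  linarith

theorem re_sq_le_of_sq_eq_mhat (hR : ∑ j, ∑ l, R j l ^ 2 ≤ F) (hh : h ^ 2 = mhat R k σ ξ tσ tξ) :
    h.re ^ 2 ≤ (1 + F) * ((tσ ^ 2 + ∑ j, tξ j ^ 2) + (σ ^ 2 + ∑ j, ξ j ^ 2)) := by
  calc h.re ^ 2 ≤ ‖h‖ ^ 2 := sq_le_sq.2 (by simpa using Complex.abs_re_le_norm h)
    _ = ‖mhat R k σ ξ tσ tξ‖ := by rw [← norm_pow, hh]
    _ ≤ _ := norm_mhat_le hR

theorem mul_sum_sq_add_im_sq_le_of_sq_eq_mhat (hR : ∑ j, ∑ l, R j l ^ 2 ≤ F)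
    (hpd : c * ∑ j, ξ j ^ 2 ≤ bilinSum R ξ ξ) (hh : h ^ 2 = mhat R k σ ξ tσ tξ) :
    c * ∑ j, ξ j ^ 2 + h.im ^ 2 ≤
      h.re ^ 2 + σ ^ 2 / 2 + 2 * tσ ^ 2 + (1 + F) / 2 * ∑ j, tξ j ^ 2 := by
  have re_eq : h.re ^ 2 - h.im ^ 2 =
      -2 * (-1) ^ k * σ * tσ + bilinSum R ξ ξ - bilinSum R tξ tξ := by
    rw [← mhat_re, ← hh, sq h, Complex.mul_re]
    ring
  have cross_le : 2 * (-1) ^ k * σ * tσ ≤ σ ^ 2 / 2 + 2 * tσ ^ 2 := by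
    rcases neg_one_pow_eq_or ℝ k with hk | hk <;> rw [hk] <;>
      linarith [sq_nonneg (σ - 2 * tσ), sq_nonneg (σ + 2 * tσ)]
  have form_le := two_mul_abs_bilinSum_le hR one_pos tξ tξ
  rw [div_one] at form_le
  linarith [le_abs_self (bilinSum R tξ tξ)]

theorem sigma_sq_le_of_sq_eq_mhat (hR : ∑ j, ∑ l, R j l ^ 2 ≤ F) (hc : 0 < c)
    (hh : h ^ 2 = mhat R k σ ξ tσ tξ) :
    σ ^ 2 ≤ tσ ^ 2 + h.re ^ 2 + h.im ^ 2 + c / 2 * ∑ j, ξ j ^ 2 +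
      2 * F / c * ∑ j, tξ j ^ 2 := by
  have im_eq : 2 * h.re * h.im =
      (-1) ^ k * (σ ^ 2 - tσ ^ 2) + (bilinSum R ξ tξ + bilinSum R tξ ξ) := by
    rw [← mhat_im, ← hh, sq h, Complex.mul_im]
    ring
  have σ_sq_le : σ ^ 2 ≤
      tσ ^ 2 + (h.re ^ 2 + h.im ^ 2) + (|bilinSum R ξ tξ| + |bilinSum R tξ ξ|) := by
    have := abs_le.1 (abs_add_le (bilinSum R ξ tξ) (bilinSum R tξ ξ))
    rcases neg_one_pow_eq_or ℝ k with hk | hk <;> rw [hk] at im_eq <;>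
      linarith [two_mul_le_add_sq h.re h.im, sq_nonneg (h.re + h.im)]
  have mixed_le := two_mul_abs_bilinSum_le hR (half_pos hc) ξ tξ
  have mixed_swap_le := two_mul_abs_bilinSum_le
    (Finset.sum_comm.trans_le hR) (half_pos hc) ξ tξ
  rw [← bilinSum_swap] at mixed_swap_le
  have weight_eq : F / (c / 2) = 2 * F / c := by field_simp
  rw [weight_eq] at mixed_le mixed_swap_le
  linarith

/-- The square of the constant in the root estimates, for forms with ellipticity constant `c` and
sum of squared coefficients at most `F`. -/
noncomputable def rootConst (c F : ℝ) : ℝ := (2 + 2 / c) * (3 + F + 2 * F / c)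

theorem one_add_le_rootConst (hc : 0 < c) (hF : 0 ≤ F) : 1 + F ≤ rootConst c F := by
  have : 0 ≤ 2 * F / c := by positivity
  have : 0 ≤ 2 / c * (3 + F + 2 * F / c) := by positivity
  rw [rootConst, add_mul]
  linarith

theorem sq_add_sum_sq_le_of_sq_eq_mhat (hR : ∑ j, ∑ l, R j l ^ 2 ≤ F) (hc : 0 < c)
    (hpd : c * ∑ j, ξ j ^ 2 ≤ bilinSum R ξ ξ) (hh : h ^ 2 = mhat R k σ ξ tσ tξ) :
    σ ^ 2 + ∑ j, ξ j ^ 2 ≤ rootConst c F * (tσ ^ 2 + ∑ j, tξ j ^ 2 + h.re ^ 2) := by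
  have real_part := mul_sum_sq_add_im_sq_le_of_sq_eq_mhat hR hpd hh
  have imag_part := sigma_sq_le_of_sq_eq_mhat hR hc hh
  have hF : 0 ≤ F := le_trans (by positivity) hR
  set D := 3 + F + 2 * F / c
  set T := tσ ^ 2 + ∑ j, tξ j ^ 2 + h.re ^ 2
  have sum_le : σ ^ 2 / 2 + c / 2 * ∑ j, ξ j ^ 2 ≤ D * T := by
    have hFc : 0 ≤ 2 * F / c := by positivity
    calc σ ^ 2 / 2 + c / 2 * ∑ j, ξ j ^ 2
        ≤ 3 * tσ ^ 2 + ((1 + F) / 2 + 2 * F / c) * ∑ j, tξ j ^ 2 + 2 * h.re ^ 2 := by linarith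
      _ ≤ D * tσ ^ 2 + D * ∑ j, tξ j ^ 2 + D * h.re ^ 2 := by gcongr <;> linarith
      _ = D * T := by ring
  have hξ : 0 ≤ c / 2 * ∑ j, ξ j ^ 2 := by positivity
  calc σ ^ 2 + ∑ j, ξ j ^ 2
      = 2 * (σ ^ 2 / 2) + 2 / c * (c / 2 * ∑ j, ξ j ^ 2) := by field_simp
    _ ≤ 2 * (D * T) + 2 / c * (D * T) := by
        have σ_le : σ ^ 2 / 2 ≤ D * T := by linarith
        have ξ_le : c / 2 * ∑ j, ξ j ^ 2 ≤ D * T := by linarith [sq_nonneg σ]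
        grw [σ_le, ξ_le]
    _ = rootConst c F * T := by
        rw [rootConst]
        ring

end Mhat

theorem stmt9_general (n : ℕ) {c F : ℝ} (hc : 0 < c) (hF : 0 ≤ F) :
    ∃ C > 0, ∀ R : Fin n → Fin n → ℝ,
      (∀ η : Fin n → ℝ, c * (∑ j, (η j) ^ 2) ≤ ∑ j, ∑ l, R j l * η j * η l) →
      ∑ j, ∑ l, R j l ^ 2 ≤ F →
      ∀ (k : ℕ) (σ : ℝ) (ξ : Fin n → ℝ) (tσ : ℝ) (tξ : Fin n → ℝ) (tξd : ℝ) (h : ℂ),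
        h ^ 2 = mhat R k σ ξ tσ tξ →
        (-Complex.I * (tξd : ℂ) + Complex.I * h).im = 0 →
        (|tξd| ≤ C * (√(tσ ^ 2 + ∑ j, (tξ j) ^ 2) + √(σ ^ 2 + ∑ j, (ξ j) ^ 2)) ∧
          √(σ ^ 2 + ∑ j, (ξ j) ^ 2) ≤ C * √(tσ ^ 2 + (∑ j, (tξ j) ^ 2) + tξd ^ 2) ∧
          (-Complex.I * (tξd : ℂ) - Complex.I * h).im = -2 * tξd) := by
  have le_const := one_add_le_rootConst hc hF
  have const_pos : 0 < rootConst c F := by linarith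
  refine ⟨√(rootConst c F), Real.sqrt_pos.2 const_pos, ?_⟩
  intro R hpd hR k σ ξ tσ tξ tξd h hh hroot
  obtain rfl : h.re = tξd := by simpa [neg_add_eq_zero, eq_comm] using hroot
  refine ⟨?_, ?_, ?_⟩
  · grw [← sqrt_add_le_sqrt_add_sqrt (by positivity) (by positivity), ← Real.sqrt_mul const_pos.le,
      ← le_const]
    exact Real.abs_le_sqrt (re_sq_le_of_sq_eq_mhat hR hh)
  · rw [← Real.sqrt_mul const_pos.le]
    exact Real.sqrt_le_sqrt (sq_add_sum_sq_le_of_sq_eq_mhat hR hc (hpd ξ) hh)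
  · simp only [neg_mul, Complex.sub_im, Complex.neg_im, Complex.I_mul_im, Complex.ofReal_re]
    ring

/-- If the root `ρ̂_{k,+} = −i t̂_{ξd} + i h` is real, then `0 ≤ t̂_{ξd} ≤ C(|t̂'| + |ζ'|)`,
`|ζ'| ≤ C |t̂|`, and `Im ρ̂_{k,−} = −2 t̂_{ξd}`. -/
theorem stmt9 (n : ℕ) (K : Type*) [MetricSpace K] [CompactSpace K]
    (R : K → Fin n → Fin n → ℝ)
    (hRcont : ∀ j l, Continuous fun z => R z j l)
    (c : ℝ) (hc : 0 < c)
    (hpd : ∀ (z : K) (η : Fin n → ℝ), c * (∑ j, (η j) ^ 2) ≤ ∑ j, ∑ l, R z j l * η j * η l) :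
    ∃ C > 0, ∀ k : ℕ, k = 1 ∨ k = 2 →
      ∀ (z : K) (σ : ℝ) (ξ : Fin n → ℝ) (tσ : ℝ) (tξ : Fin n → ℝ) (tξd : ℝ) (h : ℂ),
        0 ≤ tξd →
        h ^ 2 = mhat (R z) k σ ξ tσ tξ →
        0 ≤ h.re →
        (-Complex.I * (tξd : ℂ) + Complex.I * h).im = 0 →
        (0 ≤ tξd ∧
          tξd ≤ C * (Real.sqrt (tσ ^ 2 + ∑ j, (tξ j) ^ 2) +
            Real.sqrt (σ ^ 2 + ∑ j, (ξ j) ^ 2)) ∧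
          Real.sqrt (σ ^ 2 + ∑ j, (ξ j) ^ 2) ≤
            C * Real.sqrt (tσ ^ 2 + (∑ j, (tξ j) ^ 2) + tξd ^ 2) ∧
          (-Complex.I * (tξd : ℂ) - Complex.I * h).im = -2 * tξd) := by
  obtain ⟨F, hF, hRF⟩ := exists_forall_sum_sum_sq_le hRcont
  obtain ⟨C, hC, hroot⟩ := stmt9_general n hc hF
  refine ⟨C, hC, fun k _ z σ ξ tσ tξ tξd h htξd hh _ hreal => ⟨htξd, ?_⟩⟩
  simpa only [abs_of_nonneg htξd] using
    hroot (R z) (hpd z) (hRF z) k σ ξ tσ tξ tξd h hh hreal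
end

section
/- There exist C₀ > 0 and C₁ > 0 such that for every z ∈ K, every ζ' ∈ ℝ × ℝ^n and every t̂ ∈ ℝ × ℝ^n × ℝ with t̂_{ξd} > 0 and |t̂'| ≤ C₀ t̂_{ξd}, and for each k ∈ {1,2}: if m̂_k(z,ζ',t̂) = 0 (i.e. the quadratic X ↦ (X + i t̂_{ξd})² + m̂_k has a double root), then, denoting by k' the other index and taking any h' ∈ ℂ with h'² = m̂_{k'}(z,ζ',t̂) and Re h' ≥ 0, both roots ρ̂_{k',±} = −i t̂_{ξd} ± i h' of X ↦ (X + i t̂_{ξd})² + m̂_{k'} satisfy Im ρ̂_{k',±} ≤ −C₁ t̂_{ξd}. -/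
/-!
Put `ε = (-1)^k` and `w = σ + i t̂_σ`. If `m̂_k = 0`, then
`m̂_{k'} = -2 ε i w² = ((1 - ε i) w)²`, so `Re h' = ±(σ + ε t̂_σ)`, and it suffices to bound `σ`
by `t̂'`. Nonnegativity of `r` at `ξ' ± t̂_{ξ'}` gives
`|Im r(ξ' + i t̂_{ξ'})| ≤ Re r(ξ' + i t̂_{ξ'}) + 2 r(t̂_{ξ'})`; inserting
`r(ξ' + i t̂_{ξ'}) = -ε i w²` and completing the square yields
`(σ - ε t̂_σ)² ≤ 2 t̂_σ² + 2 r(t̂_{ξ'})`. Hence `|Re h'| ≲ |t̂'| ≤ C₀ t̂_{ξd}`.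
-/

open Complex QuadraticMap

theorem abs_polar_le_add {𝕜 E : Type*} [CommRing 𝕜] [LinearOrder 𝕜] [IsStrictOrderedRing 𝕜]
    [AddCommGroup E] [Module 𝕜 E] (Q : QuadraticForm 𝕜 E) (hQ : ∀ x, 0 ≤ Q x) (x y : E) :
    |polar Q x y| ≤ Q x + Q y := by
  have add_polar_nonneg : 0 ≤ Q x + Q y + polar Q x y := QuadraticMap.map_add Q x y ▸ hQ (x + y)
  have sub_polar_nonneg : 0 ≤ Q x + Q y - polar Q x y := by
    have map_add_neg := QuadraticMap.map_add Q x (-y)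
    rw [QuadraticMap.map_neg, polar_neg_right, ← sub_eq_add_neg (Q x + Q y)] at map_add_neg
    exact map_add_neg ▸ hQ (x + -y)
  exact abs_le.2 ⟨by linarith, by linarith⟩

section CoeffForm

variable {ι : Type*} [Fintype ι] [DecidableEq ι]

/-- The quadratic form `η ↦ ∑ j, ∑ l, R j l * η j * η l` with coefficients `R`, which need not be
symmetric. For `R = R z` this is the form `r_z` on `ℝ^n`. -/
def coeffForm {S : Type*} [CommRing S] (R : ι → ι → S) : QuadraticForm S (ι → S) :=
  (Matrix.of R).toQuadraticForm'

theorem coeffForm_apply {S : Type*} [CommRing S] (R : ι → ι → S) (η : ι → S) :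
    coeffForm R η = ∑ j, ∑ l, R j l * η j * η l := by
  simp only [coeffForm, Matrix.toQuadraticForm', LinearMap.BilinMap.toQuadraticMap_apply,
    Matrix.toLinearMap₂'_apply, Matrix.of_apply, smul_eq_mul]
  exact Finset.sum_congr rfl fun j _ => Finset.sum_congr rfl fun l _ => by ring

theorem polar_coeffForm {S : Type*} [CommRing S] (R : ι → ι → S) (x y : ι → S) :
    polar (coeffForm R) x y = ∑ j, ∑ l, R j l * (x j * y l + y j * x l) := by
  simp only [polar, coeffForm_apply, Pi.add_apply, ← Finset.sum_sub_distrib]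
  exact Finset.sum_congr rfl fun j _ => Finset.sum_congr rfl fun l _ => by ring

theorem re_coeffForm_ofReal (R : ι → ι → ℝ) (x y : ι → ℝ) :
    (coeffForm (fun j l => (R j l : ℂ)) fun j => x j + I * y j).re =
      coeffForm R x - coeffForm R y := by
  simp [coeffForm_apply, ← Finset.sum_sub_distrib]

theorem im_coeffForm_ofReal (R : ι → ι → ℝ) (x y : ι → ℝ) :
    (coeffForm (fun j l => (R j l : ℂ)) fun j => x j + I * y j).im =
      polar (coeffForm R) x y := by
  simp only [coeffForm_apply, polar_coeffForm, im_sum]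
  refine Finset.sum_congr rfl fun j _ => Finset.sum_congr rfl fun l _ => ?_
  simp only [mul_re, mul_im, add_re, add_im, ofReal_re, ofReal_im, I_re, I_im]
  ring

theorem coeffForm_le_sum_abs_mul (R : ι → ι → ℝ) (η : ι → ℝ) :
    coeffForm R η ≤ (∑ j, ∑ l, |R j l|) * ∑ j, η j ^ 2 := by
  have sq_le (j : ι) : η j ^ 2 ≤ ∑ j, η j ^ 2 :=
    Finset.single_le_sum (f := fun j => η j ^ 2) (fun _ _ => sq_nonneg _) (Finset.mem_univ j)
  have abs_mul_le (j l : ι) : |η j * η l| ≤ ∑ j, η j ^ 2 := by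
    rw [abs_mul]
    linarith [two_mul_le_add_sq |η j| |η l|, sq_abs (η j), sq_abs (η l), sq_le j, sq_le l]
  simp only [coeffForm_apply, Finset.sum_mul]
  refine Finset.sum_le_sum fun j _ => Finset.sum_le_sum fun l _ => ?_
  calc R j l * η j * η l ≤ |R j l * η j * η l| := le_abs_self _
    _ = |R j l| * |η j * η l| := by rw [mul_assoc, abs_mul]
    _ ≤ |R j l| * ∑ j, η j ^ 2 := by gcongr; exact abs_mul_le j l

theorem exists_forall_coeffForm_le {K : Type*} [TopologicalSpace K] [CompactSpace K]
    {R : K → ι → ι → ℝ} (hR : ∀ j l, Continuous fun z => R z j l) :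
    ∃ Λ, ∀ z η, coeffForm (R z) η ≤ Λ * ∑ j, η j ^ 2 := by
  have sum_abs_continuous : Continuous fun z => ∑ j, ∑ l, |R z j l| := by fun_prop
  obtain ⟨Λ, hΛ⟩ := (isCompact_range sum_abs_continuous).bddAbove
  refine ⟨Λ, fun z η => (coeffForm_le_sum_abs_mul (R z) η).trans ?_⟩
  gcongr
  exact hΛ (Set.mem_range_self z)

end CoeffForm

section Mhat

variable {n : ℕ} {R : Fin n → Fin n → ℝ} {k k' : ℕ} {σ tσ : ℝ} {ξ tξ : Fin n → ℝ}

theorem mhat_eq : mhat R k σ ξ tσ tξ =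
    (-1) ^ k * I * (σ + I * tσ) ^ 2 +
      coeffForm (fun j l => (R j l : ℂ)) fun j => ξ j + I * tξ j := by
  rw [mhat, coeffForm_apply]

theorem re_mhat : (mhat R k σ ξ tσ tξ).re =
    coeffForm R ξ - coeffForm R tξ - 2 * (-1) ^ k * σ * tσ := by
  rw [mhat_eq, add_re, re_coeffForm_ofReal]
  have re_term : ((-1) ^ k * I * (σ + I * tσ) ^ 2 : ℂ).re = -(2 * (-1) ^ k * σ * tσ) := by
    rcases k.even_or_odd with hk | hk <;>
      simp only [hk.neg_one_pow, pow_two, mul_re, mul_im, add_re, add_im, neg_re, neg_im, one_re,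
        one_im, ofReal_re, ofReal_im, I_re, I_im] <;> ring
  rw [re_term]
  ring

theorem im_mhat : (mhat R k σ ξ tσ tξ).im =
    (-1) ^ k * (σ ^ 2 - tσ ^ 2) + polar (coeffForm R) ξ tξ := by
  rw [mhat_eq, add_im, im_coeffForm_ofReal]
  rcases k.even_or_odd with hk | hk <;> simp [hk.neg_one_pow, pow_two]

theorem sq_sub_le_of_mhat_eq_zero (hR : ∀ η, 0 ≤ coeffForm R η)
    (hm : mhat R k σ ξ tσ tξ = 0) :
    (σ - (-1) ^ k * tσ) ^ 2 ≤ 2 * tσ ^ 2 + 2 * coeffForm R tξ := by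
  have re_eq := re_mhat.symm.trans (congrArg re hm)
  have im_eq := im_mhat.symm.trans (congrArg im hm)
  have polar_bound := abs_le.1 (abs_polar_le_add (coeffForm R) hR ξ tξ)
  rw [zero_re] at re_eq
  rw [zero_im] at im_eq
  rcases neg_one_pow_eq_or ℝ k with hk | hk <;> rw [hk] at re_eq im_eq ⊢ <;> linarith

theorem mhat_eq_sq_of_mhat_eq_zero (hk : Odd (k + k')) (hm : mhat R k σ ξ tσ tξ = 0) :
    mhat R k' σ ξ tσ tξ = ((1 - (-1) ^ k * I) * (σ + I * tσ)) ^ 2 := by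
  have neg_one_pow_sq : ((-1 : ℂ) ^ k) ^ 2 = 1 := by
    rw [← pow_mul', (even_two_mul k).neg_one_pow]
  have neg_one_pow_eq_neg : (-1 : ℂ) ^ k' = -(-1) ^ k := by
    have mul_eq : (-1 : ℂ) ^ k * (-1) ^ k' = -1 := by rw [← pow_add, hk.neg_one_pow]
    linear_combination (-1) ^ k * mul_eq - (-1) ^ k' * neg_one_pow_sq
  rw [mhat_eq] at hm ⊢
  rw [neg_one_pow_eq_neg]
  linear_combination hm - (σ + I * tσ) ^ 2 * (I ^ 2 * neg_one_pow_sq + I_sq)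

theorem re_sq_le_of_mhat_eq_zero (hR : ∀ η, 0 ≤ coeffForm R η) (hk : Odd (k + k'))
    (hm : mhat R k σ ξ tσ tξ = 0) {h : ℂ} (hh : h ^ 2 = mhat R k' σ ξ tσ tξ) :
    h.re ^ 2 ≤ 12 * tσ ^ 2 + 4 * coeffForm R tξ := by
  have re_root : ((1 - (-1) ^ k * I) * (σ + I * tσ) : ℂ).re = σ + (-1) ^ k * tσ := by
    rcases k.even_or_odd with hk | hk <;> simp [hk.neg_one_pow, sub_eq_add_neg]
  have re_sq : h.re ^ 2 = (σ + (-1) ^ k * tσ) ^ 2 := by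
    rw [mhat_eq_sq_of_mhat_eq_zero hk hm, sq_eq_sq_iff_eq_or_eq_neg] at hh
    rcases hh with rfl | rfl <;> simp only [neg_re, re_root, even_two, Even.neg_pow]
  calc h.re ^ 2 = ((σ - (-1) ^ k * tσ) + 2 * (-1) ^ k * tσ) ^ 2 := by rw [re_sq]; ring
    _ ≤ 2 * ((σ - (-1) ^ k * tσ) ^ 2 + (2 * (-1) ^ k * tσ) ^ 2) := add_sq_le
    _ = 2 * (σ - (-1) ^ k * tσ) ^ 2 + 8 * tσ ^ 2 := by
      linear_combination 8 * tσ ^ 2 * (even_two_mul k).neg_one_pow (α := ℝ)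
    _ ≤ 12 * tσ ^ 2 + 4 * coeffForm R tξ := by linarith [sq_sub_le_of_mhat_eq_zero hR hm]

theorem abs_re_le_of_mhat_eq_zero {Λ : ℝ} (hR : ∀ η, 0 ≤ coeffForm R η)
    (hΛ : ∀ η, coeffForm R η ≤ Λ * ∑ j, η j ^ 2) (hk : Odd (k + k'))
    (hm : mhat R k σ ξ tσ tξ = 0) {h : ℂ} (hh : h ^ 2 = mhat R k' σ ξ tσ tξ) :
    |h.re| ≤ √(12 + 4 * |Λ|) * √(tσ ^ 2 + ∑ j, tξ j ^ 2) := by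
  have sum_nonneg : 0 ≤ ∑ j, tξ j ^ 2 := Finset.sum_nonneg fun _ _ => sq_nonneg _
  rw [← Real.sqrt_mul (by positivity)]
  apply Real.abs_le_sqrt
  calc h.re ^ 2 ≤ 12 * tσ ^ 2 + 4 * coeffForm R tξ := re_sq_le_of_mhat_eq_zero hR hk hm hh
    _ ≤ 12 * tσ ^ 2 + 4 * (|Λ| * ∑ j, tξ j ^ 2) := by
      gcongr
      exact (hΛ tξ).trans (by gcongr; exact le_abs_self Λ)
    _ ≤ (12 + 4 * |Λ|) * (tσ ^ 2 + ∑ j, tξ j ^ 2) := by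
      linarith [mul_nonneg (abs_nonneg Λ) (sq_nonneg tσ)]

end Mhat

theorem im_roots_le_of_abs_re_le {C t : ℝ} {h : ℂ} (hh : |h.re| ≤ (1 - C) * t) :
    (-I * (t : ℂ) + I * h).im ≤ -(C * t) ∧ (-I * (t : ℂ) - I * h).im ≤ -(C * t) := by
  have im_add : (-I * (t : ℂ) + I * h).im = -t + h.re := by simp
  have im_sub : (-I * (t : ℂ) - I * h).im = -t - h.re := by simp
  obtain ⟨neg_le_re, re_le⟩ := abs_le.1 hh
  exact ⟨by linarith, by linarith⟩

theorem stmt11_general (Λ : ℝ) {C₁ : ℝ} (hC₁ : C₁ < 1) :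
    ∃ C₀ > 0, ∀ (n : ℕ) (R : Fin n → Fin n → ℝ),
      (∀ η, 0 ≤ coeffForm R η) → (∀ η, coeffForm R η ≤ Λ * ∑ j, η j ^ 2) →
      ∀ (σ : ℝ) (ξ : Fin n → ℝ) (tσ : ℝ) (tξ : Fin n → ℝ) (tξd : ℝ),
        √(tσ ^ 2 + ∑ j, tξ j ^ 2) ≤ C₀ * tξd →
        ∀ k k' : ℕ, Odd (k + k') → mhat R k σ ξ tσ tξ = 0 →
        ∀ h' : ℂ, h' ^ 2 = mhat R k' σ ξ tσ tξ →
          (-I * (tξd : ℂ) + I * h').im ≤ -(C₁ * tξd) ∧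
          (-I * (tξd : ℂ) - I * h').im ≤ -(C₁ * tξd) := by
  have sqrt_pos : 0 < √(12 + 4 * |Λ|) := by positivity
  refine ⟨(1 - C₁) / √(12 + 4 * |Λ|), div_pos (sub_pos.2 hC₁) sqrt_pos, ?_⟩
  intro n R hR hΛ σ ξ tσ tξ tξd ht k k' hk hm h' hh'
  apply im_roots_le_of_abs_re_le
  calc |h'.re| ≤ √(12 + 4 * |Λ|) * √(tσ ^ 2 + ∑ j, tξ j ^ 2) :=
        abs_re_le_of_mhat_eq_zero hR hΛ hk hm hh'
    _ ≤ √(12 + 4 * |Λ|) * ((1 - C₁) / √(12 + 4 * |Λ|) * tξd) := by gcongr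
    _ = (1 - C₁) * tξd := by rw [← mul_assoc, mul_div_cancel₀ _ sqrt_pos.ne']

/-- If `|t̂'| ≤ C₀ t̂_{ξd}` and `q̂_k` has a double root (`m̂_k = 0`), then both roots of the
other factor `q̂_{k'}` lie in the lower half-plane: `Im ρ̂_{k',±} ≤ −C₁ t̂_{ξd}`. -/
theorem stmt11 (n : ℕ) (K : Type*) [MetricSpace K] [CompactSpace K]
    (R : K → Fin n → Fin n → ℝ)
    (hRcont : ∀ j l, Continuous fun z => R z j l)
    (c : ℝ) (hc : 0 < c)
    (hpd : ∀ (z : K) (η : Fin n → ℝ), c * (∑ j, (η j) ^ 2) ≤ ∑ j, ∑ l, R z j l * η j * η l) :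
    ∃ C₀ > 0, ∃ C₁ > 0,
      ∀ (z : K) (σ : ℝ) (ξ : Fin n → ℝ) (tσ : ℝ) (tξ : Fin n → ℝ) (tξd : ℝ),
        0 < tξd →
        Real.sqrt (tσ ^ 2 + ∑ j, (tξ j) ^ 2) ≤ C₀ * tξd →
        ∀ k : ℕ, k = 1 ∨ k = 2 →
        mhat (R z) k σ ξ tσ tξ = 0 →
        ∀ h' : ℂ, h' ^ 2 = mhat (R z) (3 - k) σ ξ tσ tξ → 0 ≤ h'.re →
          (-Complex.I * (tξd : ℂ) + Complex.I * h').im ≤ -(C₁ * tξd) ∧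
          (-Complex.I * (tξd : ℂ) - Complex.I * h').im ≤ -(C₁ * tξd) := by
  obtain ⟨Λ, hΛ⟩ := exists_forall_coeffForm_le hRcont
  obtain ⟨C₀, hC₀, roots_le⟩ := stmt11_general Λ one_half_lt_one
  have coeffForm_nonneg (z : K) (η : Fin n → ℝ) : 0 ≤ coeffForm (R z) η :=
    coeffForm_apply (R z) η ▸ (by positivity : 0 ≤ c * ∑ j, η j ^ 2).trans (hpd z η)
  refine ⟨C₀, hC₀, 1 / 2, one_half_pos, fun z σ ξ tσ tξ tξd _ ht k hk hm h' hh' _ => ?_⟩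
  have odd_add : Odd (k + (3 - k)) := by rcases hk with rfl | rfl <;> decide
  exact roots_le n (R z) (coeffForm_nonneg z) (hΛ z) σ ξ tσ tξ tξd ht k (3 - k) odd_add hm h' hh'
end
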